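/- Let φ : (R,m) → (S,n) be a flat local homomorphism of commutative Noetherian local rings such that the induced map R/m → S/mS is an isomorphism, and let M and N be finitely generated R-modules. Assume Ext^i_R(M,N) = 0 for all i ≥ 1. If for each i with 1 ≤ i ≤ dim_R(N) the R-module Ext^i_R(S ⊗_R M, N) belongs to NAK(R) (i.e., it is either zero or satisfies m·Ext^i_R(S ⊗_R M, N) ≠ Ext^i_R(S ⊗_R M, N)), then Ext^i_R(S ⊗_R M, N) = 0 for all i ≥ 1. -/

import Mathlib

universe u

open CategoryTheory TensorProduct

/-- `Ext^i_R(M, N)` as an object of `ModuleCat R`. -/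
noncomputable def extModule (R : Type u) [CommRing R] (M N : Type u) [AddCommGroup M]
    [Module R M] [AddCommGroup N] [Module R N] (i : ℕ) : ModuleCat.{u} R :=
  ((Ext R (ModuleCat.{u} R) i).obj (Opposite.op (ModuleCat.of R M))).obj (ModuleCat.of R N)

/-!
Tensoring with the flat module `F = S` and an injective resolution of `N` turn the vanishing of
`Ext^i(M, N)` into `Ext^i(F ⊗ M, N) ≅ Ext^i(F, H)` with `H = Hom(M, N)`.

If `A` is a Noetherian `R`-algebra and `G` a flat `A`-module, then `Ext^i_R(F, G) = 0` for
`i > dim A`. Indeed, with `E` denoting injective hulls, `G` embeds purely in the flat cotorsion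
module `∏ Hom_A(E(A/q), G ⊗ E(A/q))` over the primes `q` with `G/qG ≠ 0`, and the flat cokernel `C`
has `C/pC ≠ 0` only for `p` strictly below such a `q`. Dimension shifting therefore ends after
`dim A` steps.

For `A = G = R/p` this gives, by prime filtrations, `Ext^i(F, T) = 0` for `i > dim R/ann H` and all
finitely generated `T` killed by `ann H`. Descend on `i`: if the vanishing holds in degree `i + 1`,
then `Ext^i(F, -)` is right exact on such `T`, and as it vanishes on finitely generated
`R/m`-modules for `i ≥ 1`, it follows that `m Ext^i(F, H) = Ext^i(F, H)`. Now NAK forces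
`Ext^i(F, H) = 0`, and since every nonzero `R/q` with `q ⊇ ann H` receives a nonzero map from `H`,
Noetherian induction on the annihilator carries the vanishing in degree `i` over to all such `T`.
-/

section ModExt

variable (R : Type u) [CommRing R] (M N : Type u) [AddCommGroup M] [Module R M]
  [AddCommGroup N] [Module R N]

/-- `Ext^n_R(M, N)` as an `Ext` group of the abelian category of `R`-modules. Unlike `extModule`,
which is a derived functor, it comes with long exact sequences in both variables. -/
abbrev ModExt (n : ℕ) : Type u :=
  Abelian.Ext.{u} (ModuleCat.of R M) (ModuleCat.of R N) n

variable {R}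

section Cocycles

variable {X Y : ModuleCat.{u} R} (P : ProjectiveResolution X) (n : ℕ)

theorem extMk_smul (r : R) (f : P.complex.X n ⟶ Y) (h : P.complex.d (n + 1) n ≫ f = 0)
    (h' : P.complex.d (n + 1) n ≫ (r • f) = 0) :
    P.extMk (r • f) (n + 1) rfl h' = r • P.extMk f (n + 1) rfl h := by
  rw [Abelian.Ext.smul_eq_comp_mk₀, P.extMk_comp_mk₀]
  congr 1

/-- The map sending an `(n + 1)`-cocycle of `Hom(P, Y)`, for a projective resolution `P` of `X`,
to its class in `Ext^{n+1}(X, Y)`. -/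
noncomputable def cocycleToExt :
    LinearMap.ker ((P.complex.linearYonedaObj R Y).sc' n (n + 1) (n + 2)).g.hom →ₗ[R]
      Abelian.Ext.{u} X Y (n + 1) where
  toFun f := P.extMk (f.1 : P.complex.X (n + 1) ⟶ Y) (n + 2) rfl f.2
  map_add' f g := (P.add_extMk (f.1 : P.complex.X (n + 1) ⟶ Y) g.1 (n + 2) rfl f.2 g.2).symm
  map_smul' r f := extMk_smul P (n + 1) r f.1 f.2 _

theorem cocycleToExt_surjective : Function.Surjective (cocycleToExt (Y := Y) P n) := by
  intro α
  obtain ⟨f, hf, rfl⟩ := P.extMk_surjective α (n + 2) rfl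
  exact ⟨⟨f, hf⟩, rfl⟩

theorem ker_cocycleToExt :
    LinearMap.ker (cocycleToExt (Y := Y) P n) =
      LinearMap.range
        ((P.complex.linearYonedaObj R Y).sc' n (n + 1) (n + 2)).moduleCatToCycles := by
  ext f
  refine (P.extMk_eq_zero_iff (f.1 : P.complex.X (n + 1) ⟶ Y) (n + 2) rfl f.2 n rfl).trans ?_
  exact exists_congr fun g => ⟨fun h => Subtype.ext h, congrArg Subtype.val⟩

end Cocycles

variable (R) in
/-- The comparison of the two constructions of `Ext`, through a projective resolution. -/
noncomputable def extModuleEquiv (n : ℕ) :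
    extModule R M N (n + 1) ≃ₗ[R] ModExt R M N (n + 1) :=
  let P := ProjectiveResolution.of (ModuleCat.of R M)
  let K := P.complex.linearYonedaObj R (ModuleCat.of R N)
  let S := K.sc' n (n + 1) (n + 2)
  let e₁ : extModule R M N (n + 1) ≅ S.moduleCatLeftHomologyData.H :=
    P.isoExt (R := R) (n + 1) (ModuleCat.of R N) ≪≫
      ShortComplex.homologyMapIso (K.isoSc' n (n + 1) (n + 2) (by simp) (by simp)) ≪≫
      S.moduleCatHomologyIso
  let e₂ : S.moduleCatLeftHomologyData.H ≃ₗ[R] ModExt R M N (n + 1) :=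
    (Submodule.quotEquivOfEq _ _ (ker_cocycleToExt P n).symm).trans
      ((cocycleToExt P n).quotKerEquivOfSurjective (cocycleToExt_surjective P n))
  e₁.toLinearEquiv.trans e₂

variable {M N}

theorem ModExt.subsingleton_of_projective [Module.Projective R M] (n : ℕ) :
    Subsingleton (ModExt R M N (n + 1)) := by
  have := (IsProjective.iff_projective M).1 ‹Module.Projective R M›
  exact Abelian.Ext.subsingleton_of_projective _ _ n

theorem ModExt.subsingleton_of_injective [Module.Injective R N] (n : ℕ) :
    Subsingleton (ModExt R M N (n + 1)) := by
  have := Module.injective_object_of_injective_module R N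
  exact Abelian.Ext.subsingleton_of_injective _ _ n

theorem ModExt.subsingleton_of_subsingleton [Subsingleton N] (n : ℕ) :
    Subsingleton (ModExt R M N n) := by
  refine subsingleton_of_forall_eq 0 fun x => ?_
  have hid : 𝟙 (ModuleCat.of R N) = 0 := by
    ext y
    exact Subsingleton.elim _ _
  rw [← Abelian.Ext.comp_mk₀_id x, hid, Abelian.Ext.mk₀_zero, Abelian.Ext.comp_zero]

theorem ModExt.subsingleton_of_linearEquiv {N' : Type u} [AddCommGroup N'] [Module R N']
    (e : N ≃ₗ[R] N') (n : ℕ) [Subsingleton (ModExt R M N n)] : Subsingleton (ModExt R M N' n) :=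
  let φ : ModExt R M N n ≃+ ModExt R M N' n :=
    ((Abelian.extFunctorObj (ModuleCat.of R M) n).mapIso e.toModuleIso).addCommGroupIsoToAddEquiv
  φ.symm.toEquiv.subsingleton

/-- `Ext^0` is `Hom`. -/
noncomputable def ModExt.zeroEquiv : ModExt R M N 0 ≃ₗ[R] (M →ₗ[R] N) :=
  Abelian.Ext.linearEquiv₀.trans ModuleCat.homLinearEquiv

end ModExt

section ShortExact

variable {R : Type u} [CommRing R] {A B C : Type u} [AddCommGroup A] [Module R A]
  [AddCommGroup B] [Module R B] [AddCommGroup C] [Module R C]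

/-- `0 → A → B → C → 0` is a short exact sequence. -/
structure IsShortExact (f : A →ₗ[R] B) (g : B →ₗ[R] C) : Prop where
  injective : Function.Injective f
  exact : Function.Exact f g
  surjective : Function.Surjective g

namespace IsShortExact

theorem subtype_mkQ (K : Submodule R B) : IsShortExact K.subtype K.mkQ :=
  ⟨K.injective_subtype, LinearMap.exact_subtype_mkQ K, K.mkQ_surjective⟩

theorem ker_subtype {g : B →ₗ[R] C} (hg : Function.Surjective g) :
    IsShortExact (LinearMap.ker g).subtype g :=
  ⟨Submodule.injective_subtype _, LinearMap.exact_subtype_ker_map g, hg⟩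

theorem mkQ_range {f : A →ₗ[R] B} (hf : Function.Injective f) :
    IsShortExact f (LinearMap.range f).mkQ :=
  ⟨hf, LinearMap.exact_map_mkQ_range f, Submodule.mkQ_surjective _⟩

variable {f : A →ₗ[R] B} {g : B →ₗ[R] C} (h : IsShortExact f g)
include h

theorem shortExact :
    (ShortComplex.mk (ModuleCat.ofHom f) (ModuleCat.ofHom g)
      (by ext x; exact h.exact.apply_apply_eq_zero x)).ShortExact :=
  ModuleCat.shortComplex_shortExact _ h.exact h.injective h.surjective

theorem exists_comp_eq {X : Type u} [AddCommGroup X] [Module R X] {φ : X →ₗ[R] B}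
    (hφ : g ∘ₗ φ = 0) : ∃ ψ : X →ₗ[R] A, f ∘ₗ ψ = φ := by
  have hmem (x : X) : φ x ∈ LinearMap.range f :=
    (h.exact (φ x)).1 (LinearMap.congr_fun hφ x)
  refine ⟨(LinearEquiv.ofInjective f h.injective).symm.toLinearMap ∘ₗ φ.codRestrict _ hmem, ?_⟩
  ext x
  exact congrArg Subtype.val
    ((LinearEquiv.ofInjective f h.injective).apply_symm_apply ⟨φ x, hmem x⟩)

section Covariant

variable {X : Type u} [AddCommGroup X] [Module R X] {n : ℕ}

theorem subsingleton_ext_middle [Subsingleton (ModExt R X A n)] [Subsingleton (ModExt R X C n)] :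
    Subsingleton (ModExt R X B n) := by
  refine subsingleton_of_forall_eq 0 fun x => ?_
  obtain ⟨y, rfl⟩ :=
    Abelian.Ext.covariant_sequence_exact₂ _ h.shortExact x (Subsingleton.elim _ _)
  rw [Subsingleton.elim y 0, Abelian.Ext.zero_comp]

theorem subsingleton_ext_right [Subsingleton (ModExt R X B n)]
    [Subsingleton (ModExt R X A (n + 1))] : Subsingleton (ModExt R X C n) := by
  refine subsingleton_of_forall_eq 0 fun x => ?_
  obtain ⟨y, rfl⟩ :=
    Abelian.Ext.covariant_sequence_exact₃ _ h.shortExact x rfl (Subsingleton.elim _ _)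
  rw [Subsingleton.elim y 0, Abelian.Ext.zero_comp]

theorem subsingleton_ext_left [Subsingleton (ModExt R X C n)]
    [Subsingleton (ModExt R X B (n + 1))] : Subsingleton (ModExt R X A (n + 1)) := by
  refine subsingleton_of_forall_eq 0 fun x => ?_
  obtain ⟨y, rfl⟩ :=
    Abelian.Ext.covariant_sequence_exact₁ _ h.shortExact x (Subsingleton.elim _ _) rfl
  rw [Subsingleton.elim y 0, Abelian.Ext.zero_comp]

variable (X n) in
/-- The connecting map `Ext^n(X, C) → Ext^{n+1}(X, A)`. -/
noncomputable def connecting : ModExt R X C n →ₗ[R] ModExt R X A (n + 1) :=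
  (Abelian.Ext.bilinearCompOfLinear R _ _ _ n 1 (n + 1) rfl).flip h.shortExact.extClass

theorem connecting_surjective [Subsingleton (ModExt R X B (n + 1))] :
    Function.Surjective (h.connecting X n) := fun x => by
  obtain ⟨y, hy⟩ :=
    Abelian.Ext.covariant_sequence_exact₁ _ h.shortExact x (Subsingleton.elim _ _) rfl
  exact ⟨y, hy⟩

theorem connecting_injective [Subsingleton (ModExt R X B n)] :
    Function.Injective (h.connecting X n) := by
  refine (injective_iff_map_eq_zero _).2 fun x hx => ?_
  obtain ⟨y, rfl⟩ := Abelian.Ext.covariant_sequence_exact₃ _ h.shortExact x rfl hx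
  rw [Subsingleton.elim y 0, Abelian.Ext.zero_comp]

/-- Dimension shifting `Ext^{n+1}(X, A) ≃ Ext^n(X, C)`. -/
noncomputable def extEquiv [Subsingleton (ModExt R X B n)]
    [Subsingleton (ModExt R X B (n + 1))] : ModExt R X A (n + 1) ≃ₗ[R] ModExt R X C n :=
  (LinearEquiv.ofBijective (h.connecting X n)
    ⟨h.connecting_injective, h.connecting_surjective⟩).symm

variable (X) in
/-- The connecting map `Hom(X, C) → Ext^1(X, A)`. -/
noncomputable def homConnecting : (X →ₗ[R] C) →ₗ[R] ModExt R X A 1 :=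
  h.connecting X 0 ∘ₗ ModExt.zeroEquiv.symm.toLinearMap

theorem ker_homConnecting :
    LinearMap.ker (h.homConnecting X) = LinearMap.range (g.compRight R (M := X)) := by
  refine Submodule.ext fun φ => ⟨fun hφ => ?_, ?_⟩
  · obtain ⟨y, hy⟩ := Abelian.Ext.covariant_sequence_exact₃ _ h.shortExact
      (ModExt.zeroEquiv.symm φ) rfl hφ
    obtain ⟨ψ, rfl⟩ := ModExt.zeroEquiv.symm.surjective y
    exact ⟨ψ, ModExt.zeroEquiv.symm.injective ((Abelian.Ext.mk₀_comp_mk₀ _ _).symm.trans hy)⟩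
  · rintro ⟨ψ, rfl⟩
    change (Abelian.Ext.mk₀ (ModuleCat.ofHom ψ ≫ ModuleCat.ofHom g)).comp
      h.shortExact.extClass (zero_add 1) = 0
    rw [← Abelian.Ext.mk₀_comp_mk₀, Abelian.Ext.comp_assoc_of_second_deg_zero,
      h.shortExact.comp_extClass, Abelian.Ext.comp_zero]

theorem exists_lift [Subsingleton (ModExt R X A 1)] (φ : X →ₗ[R] C) :
    ∃ ψ : X →ₗ[R] B, g ∘ₗ ψ = φ := by
  have hφ : φ ∈ LinearMap.ker (h.homConnecting X) := Subsingleton.elim (α := ModExt R X A 1) _ _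
  rwa [h.ker_homConnecting] at hφ

variable (X) in
/-- `Ext^1(X, A)` as the group of maps `X → C` modulo those that lift to `B`. -/
noncomputable def extOneEquiv [Subsingleton (ModExt R X B 1)] :
    ModExt R X A 1 ≃ₗ[R] (X →ₗ[R] C) ⧸ LinearMap.range (g.compRight R (M := X)) :=
  ((Submodule.quotEquivOfEq _ _ h.ker_homConnecting.symm).trans
    ((h.homConnecting X).quotKerEquivOfSurjective (h.connecting_surjective.comp
      ModExt.zeroEquiv.symm.surjective))).symm

end Covariant

section Contravariant

variable {Y : Type u} [AddCommGroup Y] [Module R Y] {n : ℕ}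

theorem subsingleton_ext_succ [Subsingleton (ModExt R A Y n)]
    [Subsingleton (ModExt R B Y (n + 1))] : Subsingleton (ModExt R C Y (n + 1)) := by
  refine subsingleton_of_forall_eq 0 fun x => ?_
  obtain ⟨y, rfl⟩ := Abelian.Ext.contravariant_sequence_exact₃ h.shortExact _ x
    (Subsingleton.elim _ _) (add_comm 1 n)
  rw [Subsingleton.elim y 0, Abelian.Ext.comp_zero]

theorem subsingleton_ext_one [Subsingleton (ModExt R B Y 1)]
    (hext : ∀ φ : A →ₗ[R] Y, ∃ ψ : B →ₗ[R] Y, ψ ∘ₗ f = φ) : Subsingleton (ModExt R C Y 1) := by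
  refine subsingleton_of_forall_eq 0 fun x => ?_
  obtain ⟨y, rfl⟩ := Abelian.Ext.contravariant_sequence_exact₃ h.shortExact _ x
    (Subsingleton.elim _ _) (add_zero 1)
  obtain ⟨φ, rfl⟩ := ModExt.zeroEquiv.symm.surjective y
  obtain ⟨ψ, rfl⟩ := hext φ
  change h.shortExact.extClass.comp (Abelian.Ext.mk₀ (ModuleCat.ofHom f ≫ ModuleCat.ofHom ψ))
    (add_zero 1) = 0
  rw [← Abelian.Ext.mk₀_comp_mk₀]
  exact h.shortExact.extClass_comp_assoc _

end Contravariant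

end IsShortExact

end ShortExact

section Cotorsion

section Flat

theorem IsShortExact.freeCover (R F : Type u) [CommRing R] [AddCommGroup F] [Module R F] :
    IsShortExact (A := LinearMap.ker (Finsupp.linearCombination R (id : F → F)))
      (Submodule.subtype _)
      (Finsupp.linearCombination R (id : F → F)) :=
  .ker_subtype (Finsupp.linearCombination_surjective R Function.surjective_id)

variable {R : Type u} [CommRing R] {A B C : Type u} [AddCommGroup A] [Module R A]
  [AddCommGroup B] [Module R B] [AddCommGroup C] [Module R C]

theorem IsShortExact.lTensor {f : A →ₗ[R] B} {g : B →ₗ[R] C} (h : IsShortExact f g)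
    [Module.Flat R C] (X : Type u) [AddCommGroup X] [Module R X] :
    IsShortExact (f.lTensor X) (g.lTensor X) :=
  ⟨LinearMap.lTensor_injective_of_exact_of_flat g h.surjective f h.injective h.exact X,
    lTensor_exact X h.exact h.surjective, LinearMap.lTensor_surjective X h.surjective⟩

theorem IsShortExact.flat_left {f : A →ₗ[R] B} {g : B →ₗ[R] C} (h : IsShortExact f g)
    [Module.Flat R B] [Module.Flat R C] : Module.Flat R A := by
  rw [Module.Flat.iff_rTensor_preserves_injective_linearMap]
  intro N N' _ _ _ _ i hi
  have hcomp : Function.Injective (i.rTensor B ∘ f.lTensor N) :=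
    (Module.Flat.rTensor_preserves_injective_linearMap i hi).comp (h.lTensor N).injective
  rw [← LinearMap.coe_comp, LinearMap.rTensor_comp_lTensor, ← LinearMap.lTensor_comp_rTensor,
    LinearMap.coe_comp] at hcomp
  exact hcomp.of_comp

end Flat

/-- An `R`-module `W` is cotorsion if maps into `W` extend along every monomorphism with flat
cokernel; equivalently, if `Ext^1_R(F, W) = 0` for all flat `F`. -/
def IsCotorsion (R W : Type u) [CommRing R] [AddCommGroup W] [Module R W] : Prop :=
  ∀ ⦃X₁ X₂ X₃ : Type u⦄ [AddCommGroup X₁] [Module R X₁] [AddCommGroup X₂] [Module R X₂]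
    [AddCommGroup X₃] [Module R X₃] [Module.Flat R X₃] ⦃f : X₁ →ₗ[R] X₂⦄ ⦃g : X₂ →ₗ[R] X₃⦄,
    IsShortExact f g → ∀ φ : X₁ →ₗ[R] W, ∃ ψ : X₂ →ₗ[R] W, ψ ∘ₗ f = φ

namespace IsCotorsion

variable {R : Type u} [CommRing R]

theorem linearMap (E E' : Type u) [AddCommGroup E] [Module R E] [AddCommGroup E'] [Module R E']
    [Module.Injective R E'] : IsCotorsion R (E →ₗ[R] E') := by
  intro X₁ X₂ X₃ _ _ _ _ _ _ _ f g h φ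
  obtain ⟨ψ, hψ⟩ := Module.Injective.extension_property R E' _ _ (f.lTensor E)
    (h.lTensor E).injective (TensorProduct.lift φ.flip)
  refine ⟨(TensorProduct.curry ψ).flip, ?_⟩
  ext x e
  exact LinearMap.congr_fun hψ (e ⊗ₜ x)

theorem pi {ι : Type u} {W : ι → Type u} [∀ i, AddCommGroup (W i)] [∀ i, Module R (W i)]
    (hW : ∀ i, IsCotorsion R (W i)) : IsCotorsion R (∀ i, W i) := by
  intro X₁ X₂ X₃ _ _ _ _ _ _ _ f g h φ
  choose ψ hψ using fun i => hW i h (LinearMap.proj i ∘ₗ φ)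
  refine ⟨LinearMap.pi ψ, ?_⟩
  ext x i
  exact LinearMap.congr_fun (hψ i) x

theorem restrictScalars {A W : Type u} [CommRing A] [Algebra R A] [AddCommGroup W] [Module A W]
    [Module R W] [IsScalarTower R A W] (hW : IsCotorsion A W) : IsCotorsion R W := by
  intro X₁ X₂ X₃ _ _ _ _ _ _ _ f g h φ
  have hA : IsShortExact (f.baseChange A) (g.baseChange A) :=
    ⟨(h.lTensor A).injective, (h.lTensor A).exact, (h.lTensor A).surjective⟩
  obtain ⟨ψ, hψ⟩ := hW hA (φ.liftBaseChange A)
  refine ⟨(LinearMap.liftBaseChangeEquiv A).symm ψ, ?_⟩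
  ext x
  simpa using LinearMap.congr_fun hψ (1 ⊗ₜ x)

theorem subsingleton_ext {W : Type u} [AddCommGroup W] [Module R W] (hW : IsCotorsion R W)
    (F : Type u) [AddCommGroup F] [Module R F] [Module.Flat R F] (n : ℕ) :
    Subsingleton (ModExt R F W (n + 1)) := by
  have h := IsShortExact.freeCover R F
  have hfree (n : ℕ) : Subsingleton (ModExt R (F →₀ R) W (n + 1)) :=
    ModExt.subsingleton_of_projective n
  induction n generalizing F with
  | zero => exact h.subsingleton_ext_one (hW h)
  | succ n ih =>
    have := h.flat_left
    have := ih (LinearMap.ker (Finsupp.linearCombination R (id : F → F)))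
      (IsShortExact.freeCover R _) fun n => ModExt.subsingleton_of_projective n
    exact h.subsingleton_ext_succ

end IsCotorsion

end Cotorsion

section TensorHom

variable {R : Type u} [CommRing R]

theorem exists_injective_embedding (N : Type u) [AddCommGroup N] [Module R N] :
    ∃ (I : Type u) (_ : AddCommGroup I) (_ : Module R I) (j : N →ₗ[R] I),
      Module.Injective R I ∧ Function.Injective j :=
  let J := Injective.under (ModuleCat.of R N)
  have : Injective (ModuleCat.of R J) := inferInstanceAs (Injective J)
  ⟨J, inferInstance, inferInstance, (Injective.ι (ModuleCat.of R N)).hom,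
    Module.injective_module_of_injective_object R J,
    (ModuleCat.mono_iff_injective _).1 inferInstance⟩

theorem IsShortExact.compRight {A B C : Type u} [AddCommGroup A] [Module R A]
    [AddCommGroup B] [Module R B] [AddCommGroup C] [Module R C] {f : A →ₗ[R] B} {g : B →ₗ[R] C}
    (h : IsShortExact f g) (X : Type u) [AddCommGroup X] [Module R X]
    [Subsingleton (ModExt R X A 1)] :
    IsShortExact (f.compRight R (M := X)) (g.compRight R (M := X)) where
  injective _ _ hφ := LinearMap.cancel_left h.injective |>.1 hφ
  exact φ := by
    refine ⟨h.exists_comp_eq, ?_⟩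
    rintro ⟨ψ, rfl⟩
    ext x
    exact h.exact.apply_apply_eq_zero (ψ x)
  surjective := h.exists_lift

theorem map_lift_range_compRight (F M : Type u) {B C : Type u} [AddCommGroup F] [Module R F]
    [AddCommGroup M] [Module R M] [AddCommGroup B] [Module R B] [AddCommGroup C] [Module R C]
    (g : B →ₗ[R] C) :
    (LinearMap.range ((g.compRight R (M := M)).compRight R (M := F))).map
        (TensorProduct.lift.equiv (RingHom.id R) F M C).toLinearMap =
      LinearMap.range (g.compRight R (M := F ⊗[R] M)) := by
  have hcomm : (TensorProduct.lift.equiv (RingHom.id R) F M C).toLinearMap ∘ₗ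
      (g.compRight R (M := M)).compRight R (M := F) =
      g.compRight R (M := F ⊗[R] M) ∘ₗ
        (TensorProduct.lift.equiv (RingHom.id R) F M B).toLinearMap := by
    refine LinearMap.ext fun φ => TensorProduct.ext' fun x m => ?_
    rfl
  rw [← LinearMap.range_comp, hcomm, LinearMap.range_comp, LinearEquiv.range, Submodule.map_top]

theorem nonempty_ext_tensor_equiv (F M : Type u) [AddCommGroup F] [Module R F] [Module.Flat R F]
    [AddCommGroup M] [Module R M] (n : ℕ) (N : Type u) [AddCommGroup N] [Module R N]
    (hMN : ∀ i, Subsingleton (ModExt R M N (i + 1))) :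
    Nonempty (ModExt R (F ⊗[R] M) N (n + 1) ≃ₗ[R] ModExt R F (M →ₗ[R] N) (n + 1)) := by
  induction n generalizing N with
  | zero =>
    obtain ⟨I, _, _, j, _, hj⟩ := exists_injective_embedding (R := R) N
    have h := IsShortExact.mkQ_range hj
    have hI : Subsingleton (ModExt R (F ⊗[R] M) I 1) := ModExt.subsingleton_of_injective 0
    have hHom : Subsingleton (ModExt R F (M →ₗ[R] I) 1) :=
      (IsCotorsion.linearMap M I).subsingleton_ext F 0
    exact ⟨(h.extOneEquiv (F ⊗[R] M)).trans
      ((Submodule.Quotient.equiv _ _ _ (map_lift_range_compRight F M _)).symm.trans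
        ((h.compRight M).extOneEquiv F).symm)⟩
  | succ n ih =>
    obtain ⟨I, _, _, j, _, hj⟩ := exists_injective_embedding (R := R) N
    have h := IsShortExact.mkQ_range hj
    have hI (i : ℕ) : Subsingleton (ModExt R (F ⊗[R] M) I (i + 1)) :=
      ModExt.subsingleton_of_injective i
    have hHom (i : ℕ) : Subsingleton (ModExt R F (M →ₗ[R] I) (i + 1)) :=
      (IsCotorsion.linearMap M I).subsingleton_ext F i
    have hMI (i : ℕ) : Subsingleton (ModExt R M I (i + 1)) := ModExt.subsingleton_of_injective i
    obtain ⟨e⟩ := ih (I ⧸ LinearMap.range j) fun i => h.subsingleton_ext_right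
    exact ⟨h.extEquiv.trans (e.trans (h.compRight M).extEquiv.symm)⟩

end TensorHom

section InjectiveHull

variable {A : Type u} [CommRing A]

theorem injective_of_retraction {E E' : Type u} [AddCommGroup E] [Module A E] [AddCommGroup E']
    [Module A E'] [Module.Injective A E'] (i : E →ₗ[A] E') (r : E' →ₗ[A] E)
    (hri : r ∘ₗ i = LinearMap.id) : Module.Injective A E where
  out X Y _ _ _ _ f hf g := by
    obtain ⟨h, hh⟩ := Module.Injective.extension_property A E' X Y f hf (i ∘ₗ g)
    refine ⟨r ∘ₗ h, fun x => ?_⟩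
    rw [LinearMap.comp_apply, ← LinearMap.comp_apply h, hh]
    exact LinearMap.congr_fun hri (g x)

section Maximal

variable {I : Type u} [AddCommGroup I] [Module A I]

theorem exists_le_maximal_disjoint {U V : Submodule A I} (hUV : Disjoint U V) :
    ∃ W, U ≤ W ∧ Maximal (Disjoint · V) W :=
  zorn_le_nonempty₀ {W | Disjoint W V} (fun c hc hchain _ _ =>
    ⟨sSup c, hchain.directedOn.disjoint_sSup_left.2 fun _ hW => hc hW, fun _ => le_sSup⟩) U hUV

variable {B U N : Submodule A I}

theorem exists_smul_sub_mem (hU : Maximal (Disjoint · B) U) {x : I} (hx : x ∉ U) :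
    ∃ a : A, ∃ b ∈ B, b ≠ 0 ∧ a • x - b ∈ U := by
  have hnot : ¬ Disjoint (U ⊔ Submodule.span A {x}) B := fun h =>
    hx (hU.le_of_ge h le_sup_left (Submodule.mem_sup_right (Submodule.mem_span_singleton_self x)))
  rw [Submodule.disjoint_def] at hnot
  push Not at hnot
  obtain ⟨b, hb, hbB, hb0⟩ := hnot
  obtain ⟨v, hv, w, hw, rfl⟩ := Submodule.mem_sup.1 hb
  obtain ⟨a, rfl⟩ := Submodule.mem_span_singleton.1 hw
  exact ⟨a, _, hbB, hb0, by simpa using hv⟩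

theorem exists_smul_eq_of_disjoint (hU : Maximal (Disjoint · B) U) (hBN : B ≤ N)
    (hNU : Disjoint N U) {x : I} (hx : x ∈ N) (hx0 : x ≠ 0) :
    ∃ a : A, ∃ b ∈ B, b ≠ 0 ∧ a • x = b := by
  obtain ⟨a, b, hb, hb0, hab⟩ :=
    exists_smul_sub_mem hU fun hxU => hx0 (Submodule.disjoint_def.1 hNU x hx hxU)
  have hmem : a • x - b ∈ N := N.sub_mem (N.smul_mem a hx) (hBN hb)
  exact ⟨a, b, hb, hb0, sub_eq_zero.1 (Submodule.disjoint_def.1 hNU _ hmem hab)⟩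

theorem injective_of_maximal_disjoint [Module.Injective A I] (hU : Maximal (Disjoint · B) U)
    (hBN : B ≤ N) (hN : Maximal (Disjoint · U) N) : Module.Injective A N := by
  obtain ⟨g, hg⟩ := Module.Injective.extension_property A I N (I ⧸ U) (U.mkQ ∘ₗ N.subtype)
    (by
      rw [← LinearMap.ker_eq_bot, LinearMap.ker_comp, Submodule.ker_mkQ]
      exact Submodule.disjoint_iff_comap_eq_bot.1 hN.prop) N.subtype
  have hgN (n : I) (hn : n ∈ N) : g (U.mkQ n) = n := LinearMap.congr_fun hg ⟨n, hn⟩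
  have hdisj : Disjoint (LinearMap.range g) U := by
    rw [Submodule.disjoint_def]
    rintro _ ⟨y, rfl⟩ hyU
    obtain ⟨z, rfl⟩ := U.mkQ_surjective y
    by_contra hz
    obtain ⟨a, b, hb, hb0, hab⟩ := exists_smul_sub_mem hU (x := z) fun hzU => hz (by
      rw [Submodule.mkQ_apply, (Submodule.Quotient.mk_eq_zero U).2 hzU, map_zero])
    have hb' : a • g (U.mkQ z) = b := by
      rw [← map_smul, ← map_smul, ← hgN b (hBN hb)]
      exact congrArg g ((Submodule.Quotient.eq U).2 hab)
    exact hb0 (Submodule.disjoint_def.1 hU.prop b (hb' ▸ U.smul_mem a hyU) hb)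
  have hrange : LinearMap.range g ≤ N :=
    hN.le_of_ge hdisj fun n hn => ⟨_, hgN n hn⟩
  refine injective_of_retraction N.subtype
    ((g ∘ₗ U.mkQ).codRestrict N fun x => hrange ⟨_, rfl⟩) ?_
  ext n
  exact hgN n n.2

end Maximal

theorem exists_injective_essential (X : Type u) [AddCommGroup X] [Module A X] :
    ∃ (E : ModuleCat.{u} A) (j : X →ₗ[A] E), Module.Injective A E ∧ Function.Injective j ∧
      ∀ x : E, x ≠ 0 → ∃ (a : A) (b : X), b ≠ 0 ∧ a • x = j b := by
  obtain ⟨I, _, _, j, _, hj⟩ := exists_injective_embedding (R := A) X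
  obtain ⟨U, -, hU⟩ := exists_le_maximal_disjoint (disjoint_bot_left (a := LinearMap.range j))
  obtain ⟨N, hBN, hN⟩ := exists_le_maximal_disjoint hU.prop.symm
  refine ⟨ModuleCat.of A N, j.codRestrict N fun x => hBN ⟨x, rfl⟩,
    injective_of_maximal_disjoint hU hBN hN, fun x y hxy => hj (congrArg Subtype.val hxy), ?_⟩
  intro x hx
  obtain ⟨a, _, ⟨b, rfl⟩, hb0, hab⟩ :=
    exists_smul_eq_of_disjoint hU hBN hN.prop x.2 fun h => hx (Subtype.ext h)
  exact ⟨a, b, fun hb => hb0 (by rw [hb, map_zero]), Subtype.ext hab⟩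

variable (A) in
/-- The injective hull of `X`. -/
noncomputable def injectiveHull (X : Type u) [AddCommGroup X] [Module A X] : ModuleCat.{u} A :=
  (exists_injective_essential X).choose

namespace injectiveHull

variable (X : Type u) [AddCommGroup X] [Module A X]

variable (A) in
/-- The embedding of `X` into its injective hull. -/
noncomputable def ι : X →ₗ[A] injectiveHull A X :=
  (exists_injective_essential X).choose_spec.choose

instance : Module.Injective A (injectiveHull A X) :=
  (exists_injective_essential X).choose_spec.choose_spec.1

theorem ι_injective : Function.Injective (ι A X) :=
  (exists_injective_essential X).choose_spec.choose_spec.2.1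

variable {X}

theorem exists_smul_eq_ι {x : injectiveHull A X} (hx : x ≠ 0) :
    ∃ (a : A) (b : X), b ≠ 0 ∧ a • x = ι A X b :=
  (exists_injective_essential X).choose_spec.choose_spec.2.2 x hx

end injectiveHull

end InjectiveHull

section Syzygies

variable {A : Type u} [CommRing A]

theorem exists_comp_eq_of_ker_le {E X Y : Type u} [AddCommGroup E] [Module A E]
    [Module.Injective A E] [AddCommGroup X] [Module A X] [AddCommGroup Y] [Module A Y]
    (β : X →ₗ[A] Y) (φ : X →ₗ[A] E) (h : LinearMap.ker β ≤ LinearMap.ker φ) :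
    ∃ ψ : Y →ₗ[A] E, ψ ∘ₗ β = φ := by
  obtain ⟨ψ, hψ⟩ := Module.Injective.extension_property A E _ _
    ((LinearMap.ker β).liftQ β le_rfl)
    (LinearMap.ker_eq_bot.1 (Submodule.ker_liftQ_eq_bot _ _ _ le_rfl))
    ((LinearMap.ker β).liftQ φ h)
  exact ⟨ψ, LinearMap.ext fun x => LinearMap.congr_fun hψ (Submodule.Quotient.mk x)⟩

section SMulPi

variable {r m : ℕ} (f : Fin r → A) (a : Fin m → Fin r → A)

/-- The map `x ↦ (f₁ x, …, fᵣ x)`. -/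
def smulPi (E : Type*) [AddCommGroup E] [Module A E] : E →ₗ[A] (Fin r → E) :=
  LinearMap.pi fun i => f i • LinearMap.id

/-- The action `x ↦ (∑ᵢ aⱼᵢ xᵢ)ⱼ` of a matrix on tuples of elements of a module. -/
def matrixSMul (E : Type*) [AddCommGroup E] [Module A E] : (Fin r → E) →ₗ[A] (Fin m → E) :=
  LinearMap.pi fun j => ∑ i, a j i • LinearMap.proj i

variable {E : Type*} [AddCommGroup E] [Module A E]

@[simp]
theorem smulPi_apply (x : E) (i : Fin r) : smulPi f E x i = f i • x := rfl

@[simp]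
theorem matrixSMul_apply (x : Fin r → E) (j : Fin m) :
    matrixSMul a E x j = ∑ i, a j i • x i := by
  simp [matrixSMul]

theorem ker_smulPi :
    LinearMap.ker (smulPi f E) =
      Submodule.torsionBySet A E (Submodule.span A (Set.range f) : Submodule A A) := by
  change _ = Submodule.torsionBySet A E (Ideal.span (Set.range f))
  rw [← Submodule.torsionBySet_eq_torsionBySet_span]
  ext x
  simp [funext_iff]

variable (G : Type*) [AddCommGroup G] [Module A G]

theorem piRight_lTensor_smulPi (z : G ⊗[A] E) :
    TensorProduct.piRight A A G (fun _ => E) ((smulPi f E).lTensor G z) =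
      smulPi f (G ⊗[A] E) z := by
  induction z with
  | zero => simp only [map_zero]
  | add x y hx hy => simp only [map_add, hx, hy]
  | tmul g x => ext i; simp [TensorProduct.piRight_apply]

theorem piRight_lTensor_matrixSMul (z : G ⊗[A] (Fin r → E)) :
    TensorProduct.piRight A A G (fun _ => E) ((matrixSMul a E).lTensor G z) =
      matrixSMul a (G ⊗[A] E) (TensorProduct.piRight A A G (fun _ => E) z) := by
  induction z with
  | zero => simp only [map_zero]
  | add x y hx hy => simp only [map_add, hx, hy]
  | tmul g x => ext j; simp [TensorProduct.piRight_apply, TensorProduct.tmul_sum]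

end SMulPi

/-- The rows of `a` generate the module of syzygies of `f`, i.e. of tuples `c` with
`∑ᵢ cᵢ fᵢ = 0`. -/
def IsSyzygyMatrix {r m : ℕ} (f : Fin r → A) (a : Fin m → Fin r → A) : Prop :=
  Submodule.span A (Set.range a) = LinearMap.ker (Fintype.linearCombination A f)

theorem exists_isSyzygyMatrix [IsNoetherianRing A] {r : ℕ} (f : Fin r → A) :
    ∃ (m : ℕ) (a : Fin m → Fin r → A), IsSyzygyMatrix f a :=
  Submodule.fg_iff_exists_fin_generating_family.1 (IsNoetherian.noetherian _)

namespace IsSyzygyMatrix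

variable {r m : ℕ} {f : Fin r → A} {a : Fin m → Fin r → A} (h : IsSyzygyMatrix f a)
include h

theorem sum_mul_eq_zero (j : Fin m) : ∑ i, a j i * f i = 0 := by
  have hj : a j ∈ LinearMap.ker (Fintype.linearCombination A f) :=
    h ▸ Submodule.subset_span ⟨j, rfl⟩
  simpa [Fintype.linearCombination_apply] using hj

theorem exists_eq_sum {c : Fin r → A} (hc : ∑ i, c i * f i = 0) :
    ∃ b : Fin m → A, ∑ j, b j • a j = c := by
  rw [← Submodule.mem_span_range_iff_exists_fun A, h]
  simpa [Fintype.linearCombination_apply] using hc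

theorem exists_eq_sum_smul {G : Type*} [AddCommGroup G] [Module A G] [Module.Flat A G]
    {x : Fin r → G} (hx : ∑ i, f i • x i = 0) : ∃ y : Fin m → G, ∀ i, x i = ∑ j, a j i • y j := by
  obtain ⟨k, c, y, hxy, hc⟩ := Module.Flat.isTrivialRelation_of_sum_smul_eq_zero hx
  choose b hb using fun l => h.exists_eq_sum (c := (c · l)) (by simpa only [mul_comm] using hc l)
  have hb (i : Fin r) (l : Fin k) : c i l = ∑ j, a j i * b l j := by
    simpa [mul_comm] using (congrFun (hb l) i).symm
  refine ⟨fun j => ∑ l, b l j • y l, fun i => ?_⟩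
  rw [hxy i]
  simp only [hb, Finset.sum_smul, Finset.smul_sum, mul_smul]
  exact Finset.sum_comm

theorem exact_smulPi_matrixSMul (E : Type u) [AddCommGroup E] [Module A E] [Module.Injective A E] :
    Function.Exact (smulPi f E) (matrixSMul a E) := by
  refine fun x => ⟨fun hx => ?_, ?_⟩
  · have hker : LinearMap.ker (Fintype.linearCombination A f) ≤
        LinearMap.ker (Fintype.linearCombination A x) := by
      rw [← h, Submodule.span_le]
      rintro _ ⟨j, rfl⟩
      simpa [Fintype.linearCombination_apply] using congrFun hx j
    obtain ⟨ψ, hψ⟩ := exists_comp_eq_of_ker_le _ _ hker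
    refine ⟨ψ 1, funext fun i => ?_⟩
    classical
    have hi := LinearMap.congr_fun hψ (Pi.single i 1)
    rw [LinearMap.comp_apply, Fintype.linearCombination_apply_single,
      Fintype.linearCombination_apply_single, one_smul, one_smul] at hi
    rw [smulPi_apply, ← map_smul, smul_eq_mul, mul_one, hi]
  · rintro ⟨e, rfl⟩
    ext j
    simp [smul_smul, ← Finset.sum_smul, h.sum_mul_eq_zero]

theorem exact_tensor (G E : Type u) [AddCommGroup G] [Module A G] [Module.Flat A G]
    [AddCommGroup E] [Module A E] [Module.Injective A E] :
    Function.Exact (smulPi f (G ⊗[A] E)) (matrixSMul a (G ⊗[A] E)) := by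
  have hex := Module.Flat.lTensor_exact G (h.exact_smulPi_matrixSMul E)
  refine fun x => ?_
  obtain ⟨z, rfl⟩ := (TensorProduct.piRight A A G (fun _ => E)).surjective x
  rw [← piRight_lTensor_matrixSMul, LinearEquiv.map_eq_zero_iff, hex z]
  refine exists_congr fun w => ?_
  rw [← piRight_lTensor_smulPi, EmbeddingLike.apply_eq_iff_eq]

end IsSyzygyMatrix

variable [IsNoetherianRing A]

theorem flat_of_isSyzygyMatrix {G : Type*} [AddCommGroup G] [Module A G]
    (h : ∀ {r m : ℕ} {f : Fin r → A} {a : Fin m → Fin r → A}, IsSyzygyMatrix f a →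
      ∀ x : Fin r → G, ∑ i, f i • x i = 0 → ∃ y : Fin m → G, ∀ i, x i = ∑ j, a j i • y j) :
    Module.Flat A G := by
  refine Module.Flat.of_forall_isTrivialRelation fun {l f x} hx => ?_
  obtain ⟨m, a, ha⟩ := exists_isSyzygyMatrix f
  obtain ⟨y, hy⟩ := h ha x hx
  exact ⟨m, fun i j => a j i, y, hy, fun j => by simpa only [mul_comm] using ha.sum_mul_eq_zero j⟩

theorem flat_pi {ι : Type*} (G : ι → Type*) [∀ i, AddCommGroup (G i)] [∀ i, Module A (G i)]
    [∀ i, Module.Flat A (G i)] : Module.Flat A (∀ i, G i) := by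
  refine flat_of_isSyzygyMatrix fun {r m f a} ha x hx => ?_
  choose y hy using fun k => ha.exists_eq_sum_smul (x := (x · k)) (by simpa using congrFun hx k)
  refine ⟨fun j k => y k j, fun i => funext fun k => ?_⟩
  rw [hy k i, Finset.sum_apply]
  rfl

theorem injective_of_exact {E : Type u} [AddCommGroup E] [Module A E]
    (h : ∀ {r m : ℕ} {f : Fin r → A} {a : Fin m → Fin r → A}, IsSyzygyMatrix f a →
      Function.Exact (smulPi f E) (matrixSMul a E)) : Module.Injective A E := by
  refine Module.Baer.injective fun I g => ?_
  obtain ⟨r, f, rfl⟩ :=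
    Submodule.fg_iff_exists_fin_generating_family.1 (IsNoetherian.noetherian I)
  obtain ⟨m, a, ha⟩ := exists_isSyzygyMatrix f
  have hf (i : Fin r) : f i ∈ Submodule.span A (Set.range f) := Submodule.subset_span ⟨i, rfl⟩
  obtain ⟨z, hz⟩ := (h ha fun i => g ⟨f i, hf i⟩).1 (by
    ext j
    rw [matrixSMul_apply, Pi.zero_apply, ← map_zero g]
    simp only [← map_smul, ← map_sum]
    congr 1
    ext
    simpa using ha.sum_mul_eq_zero j)
  refine ⟨LinearMap.toSpanSingleton A _ z, fun y hy => ?_⟩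
  induction hy using Submodule.span_induction with
  | mem y hy =>
    obtain ⟨i, rfl⟩ := hy
    exact congrFun hz i
  | zero => rw [map_zero]; exact (map_zero g).symm
  | add x y hx hy hx' hy' => rw [map_add, hx', hy', ← map_add]; rfl
  | smul c x hx hx' => rw [map_smul, hx', ← map_smul]; rfl

section Injective

variable (G E E' : Type u) [AddCommGroup E] [Module A E] [Module.Injective A E]
  [AddCommGroup E'] [Module A E'] [Module.Injective A E'] [AddCommGroup G] [Module A G]

theorem flat_linearMap_of_injective : Module.Flat A (E →ₗ[A] E') := by
  refine flat_of_isSyzygyMatrix fun {r m f a} ha x hx => ?_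
  have hker : LinearMap.ker (matrixSMul a E) ≤
      LinearMap.ker (LinearMap.lsum A (fun _ => E) A x) := by
    rw [(ha.exact_smulPi_matrixSMul E).linearMap_ker_eq]
    rintro _ ⟨e, rfl⟩
    simpa using LinearMap.congr_fun hx e
  obtain ⟨ψ, hψ⟩ := exists_comp_eq_of_ker_le _ _ hker
  refine ⟨fun j => ψ ∘ₗ LinearMap.single A (fun _ => E) j, fun i => LinearMap.ext fun e => ?_⟩
  have hsingle : matrixSMul a E (Pi.single i e) = ∑ j, a j i • Pi.single j e := by
    ext j
    simp [Pi.single_apply]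
  have hi := LinearMap.congr_fun hψ (Pi.single i e)
  rw [LinearMap.comp_apply, hsingle, LinearMap.lsum_piSingle, map_sum] at hi
  simpa using hi.symm

theorem injective_tensor [Module.Flat A G] : Module.Injective A (G ⊗[A] E) :=
  injective_of_exact fun ha => ha.exact_tensor G E

end Injective

end Syzygies

section HullsOfPrimes

variable {A : Type u} [CommRing A]

theorem isSMulRegular_quotient {q : Ideal A} [hq : q.IsPrime] {s : A} (hs : s ∉ q) :
    IsSMulRegular (A ⧸ q) s :=
  (isSMulRegular_quotient_iff_mem_of_smul_mem q s).2 fun _ hx =>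
    (hq.mem_or_mem hx).resolve_left hs

theorem mem_smul_top_of_smul_mem {C : Type*} [AddCommGroup C] [Module A C] [Module.Flat A C]
    {q : Ideal A} [q.IsPrime] {s : A} (hs : s ∉ q) {y : C}
    (hy : s • y ∈ q • (⊤ : Submodule A C)) : y ∈ q • (⊤ : Submodule A C) :=
  (isSMulRegular_quotient_iff_mem_of_smul_mem _ s).1
    (((TensorProduct.tensorQuotEquivQuotSMul C q).isSMulRegular_congr s).1
      ((isSMulRegular_quotient hs).lTensor C)) y hy

theorem isSMulRegular_injectiveHull {X : Type u} [AddCommGroup X] [Module A X] {s : A}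
    (hs : IsSMulRegular X s) : IsSMulRegular (injectiveHull A X) s := by
  refine IsSMulRegular.of_right_eq_zero_of_smul fun x hx => ?_
  by_contra hx0
  obtain ⟨a, b, hb, hab⟩ := injectiveHull.exists_smul_eq_ι hx0
  refine hb (hs (injectiveHull.ι_injective (A := A) X ?_))
  simp only [map_smul, smul_zero, map_zero, ← hab]
  rw [smul_comm, hx, smul_zero]

theorem exists_smul_mem_range_ι {q : Ideal A} (hq : q ≠ ⊤) {x : injectiveHull A (A ⧸ q)}
    (hx : x ∈ Submodule.torsionBySet A _ (q : Set A)) :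
    ∃ s ∉ q, s • x ∈ LinearMap.range (injectiveHull.ι A (A ⧸ q)) := by
  by_cases hx0 : x = 0
  · exact ⟨1, (Ideal.ne_top_iff_one q).1 hq, by simp [hx0]⟩
  · obtain ⟨a, b, hb, hab⟩ := injectiveHull.exists_smul_eq_ι hx0
    refine ⟨a, fun ha => hb (injectiveHull.ι_injective (A := A) _ ?_), b, hab.symm⟩
    rw [← hab, map_zero]
    exact (Submodule.mem_torsionBySet_iff _ _).1 hx ⟨a, ha⟩

theorem torsionBySet_injectiveHull_eq_bot {I q : Ideal A} [q.IsPrime] (hI : ¬I ≤ q) :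
    Submodule.torsionBySet A (injectiveHull A (A ⧸ q)) (I : Set A) = ⊥ := by
  obtain ⟨c, hc, hcq⟩ := Set.not_subset.1 hI
  refine eq_bot_iff.2 fun x hx => ?_
  exact (isSMulRegular_injectiveHull (isSMulRegular_quotient hcq)).right_eq_zero_of_smul
    ((Submodule.mem_torsionBySet_iff _ _).1 hx ⟨c, hc⟩)

theorem torsionBySet_le_ker_of_apply_ι_one {Y : Type*} [AddCommGroup Y] [Module A Y] {q : Ideal A}
    (hq : q ≠ ⊤) (hY : ∀ s ∉ q, IsSMulRegular Y s) {φ : injectiveHull A (A ⧸ q) →ₗ[A] Y}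
    (hφ : φ (injectiveHull.ι A (A ⧸ q) 1) = 0) :
    Submodule.torsionBySet A (injectiveHull A (A ⧸ q)) (q : Set A) ≤ LinearMap.ker φ := by
  intro x hx
  obtain ⟨t, ht, b, hb⟩ := exists_smul_mem_range_ι hq hx
  obtain ⟨b, rfl⟩ := Ideal.Quotient.mk_surjective b
  have hb1 : Ideal.Quotient.mk q b = b • (1 : A ⧸ q) := by
    rw [Algebra.smul_def, mul_one, Ideal.Quotient.algebraMap_eq]
  refine (hY t ht).right_eq_zero_of_smul ?_
  rw [← map_smul, ← hb, hb1, map_smul, map_smul, hφ, smul_zero]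

theorem torsionBySet_tensor_le (G E : Type u) [AddCommGroup G] [Module A G] [Module.Flat A G]
    [AddCommGroup E] [Module A E] {I : Ideal A} (hI : I.FG) :
    Submodule.torsionBySet A (G ⊗[A] E) (I : Set A) ≤
      LinearMap.range ((Submodule.torsionBySet A E (I : Set A)).subtype.lTensor G) := by
  obtain ⟨r, f, rfl⟩ := Submodule.fg_iff_exists_fin_generating_family.1 hI
  have hex := Module.Flat.lTensor_exact G (LinearMap.exact_subtype_ker_map (smulPi f E))
  rw [ker_smulPi] at hex
  rw [← hex.linearMap_ker_eq, ← ker_smulPi]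
  intro z hz
  rw [LinearMap.mem_ker] at hz ⊢
  rwa [← LinearEquiv.map_eq_zero_iff (TensorProduct.piRight A A G fun _ => E),
    piRight_lTensor_smulPi]

theorem exists_smul_eq_tmul_ι [IsNoetherianRing A] (G : Type u) [AddCommGroup G] [Module A G]
    [Module.Flat A G] {q : Ideal A} [hq : q.IsPrime] {z : G ⊗[A] injectiveHull A (A ⧸ q)}
    (hz : z ∈ Submodule.torsionBySet A _ (q : Set A)) :
    ∃ s ∉ q, ∃ g : G, s • z = g ⊗ₜ injectiveHull.ι A (A ⧸ q) 1 := by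
  obtain ⟨w, rfl⟩ := torsionBySet_tensor_le G _ (IsNoetherian.noetherian q) hz
  clear hz
  induction w with
  | zero => exact ⟨1, (Ideal.ne_top_iff_one q).1 hq.ne_top, 0, by simp⟩
  | tmul g x =>
    obtain ⟨s, hs, b, hb⟩ := exists_smul_mem_range_ι hq.ne_top x.2
    obtain ⟨b, rfl⟩ := Submodule.Quotient.mk_surjective q b
    refine ⟨s, hs, b • g, ?_⟩
    rw [LinearMap.lTensor_tmul, Submodule.subtype_apply, ← TensorProduct.tmul_smul, ← hb,
      TensorProduct.smul_tmul, ← map_smul, Algebra.smul_def, mul_one]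
    rfl
  | add z z' hz hz' =>
    obtain ⟨s, hs, g, hg⟩ := hz
    obtain ⟨s', hs', g', hg'⟩ := hz'
    refine ⟨s * s', hq.mul_notMem hs hs', s' • g + s • g', ?_⟩
    rw [map_add, smul_add, mul_comm, mul_smul, hg, mul_comm, mul_smul, hg',
      TensorProduct.add_tmul, TensorProduct.smul_tmul', TensorProduct.smul_tmul']

end HullsOfPrimes

section SMulTop

variable {A : Type u} [CommRing A]

theorem exists_eq_sum_smul_of_torsionBySet_le {E E' : Type u} [AddCommGroup E] [Module A E]
    [AddCommGroup E'] [Module A E'] [Module.Injective A E'] {r : ℕ} {f : Fin r → A}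
    {φ : E →ₗ[A] E'}
    (hφ : Submodule.torsionBySet A E (Submodule.span A (Set.range f) : Submodule A A) ≤
      LinearMap.ker φ) :
    ∃ ψ : Fin r → E →ₗ[A] E', φ = ∑ i, f i • ψ i := by
  rw [← ker_smulPi] at hφ
  obtain ⟨ψ, rfl⟩ := exists_comp_eq_of_ker_le _ _ hφ
  refine ⟨fun i => ψ ∘ₗ LinearMap.single A (fun _ => E) i, LinearMap.ext fun x => ?_⟩
  have hx : smulPi f E x = ∑ i, f i • Pi.single i x := by
    ext i
    simp [Pi.single_apply]
  rw [LinearMap.comp_apply, hx, map_sum]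
  simp

theorem pi_linearMap_mem_smul_top {ι : Type*} {E E' : ι → Type u} [∀ k, AddCommGroup (E k)]
    [∀ k, Module A (E k)] [∀ k, AddCommGroup (E' k)] [∀ k, Module A (E' k)]
    [∀ k, Module.Injective A (E' k)] {I : Ideal A} (hI : I.FG) {φ : ∀ k, E k →ₗ[A] E' k}
    (hφ : ∀ k, Submodule.torsionBySet A (E k) (I : Set A) ≤ LinearMap.ker (φ k)) :
    φ ∈ I • (⊤ : Submodule A (∀ k, E k →ₗ[A] E' k)) := by
  obtain ⟨r, f, rfl⟩ := Submodule.fg_iff_exists_fin_generating_family.1 hI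
  choose ψ hψ using fun k => exists_eq_sum_smul_of_torsionBySet_le (hφ k)
  have hsum : φ = ∑ i, f i • fun k => ψ k i := by
    funext k
    simp [hψ k]
  rw [hsum]
  exact Submodule.sum_mem _ fun i _ =>
    Submodule.smul_mem_smul (Submodule.subset_span ⟨i, rfl⟩) trivial

theorem apply_eq_zero_of_mem_smul_top {E E' : Type*} [AddCommGroup E] [Module A E]
    [AddCommGroup E'] [Module A E'] {I : Ideal A} {φ : E →ₗ[A] E'}
    (hφ : φ ∈ I • (⊤ : Submodule A (E →ₗ[A] E'))) {x : E}
    (hx : x ∈ Submodule.torsionBySet A E (I : Set A)) : φ x = 0 := by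
  induction hφ using Submodule.smul_induction_on' with
  | smul c hc ψ _ =>
    rw [LinearMap.smul_apply, ← map_smul, (Submodule.mem_torsionBySet_iff _ _).1 hx ⟨c, hc⟩,
      map_zero]
  | add ψ _ ψ' _ h h' => rw [LinearMap.add_apply, h, h', add_zero]

theorem IsShortExact.flat_right_of_pure {M P C : Type u} [AddCommGroup M] [Module A M]
    [AddCommGroup P] [Module A P] [AddCommGroup C] [Module A C] {f : M →ₗ[A] P} {g : P →ₗ[A] C}
    (h : IsShortExact f g) [Module.Flat A P]
    (hpure : ∀ (I : Ideal A) (x : M), f x ∈ I • (⊤ : Submodule A P) →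
      x ∈ I • (⊤ : Submodule A M)) : Module.Flat A C := by
  rw [Module.Flat.iff_rTensor_injective']
  refine fun I => (injective_iff_map_eq_zero _).2 fun z hz => ?_
  obtain ⟨w, rfl⟩ := LinearMap.lTensor_surjective I h.surjective z
  have hlid {X Y : Type u} [AddCommGroup X] [Module A X] [AddCommGroup Y] [Module A Y]
      (k : X →ₗ[A] Y) (t : I ⊗[A] X) :
      TensorProduct.lid A Y (I.subtype.rTensor Y (k.lTensor I t)) =
        k (TensorProduct.lid A X (I.subtype.rTensor X t)) := by
    induction t with
    | zero => simp only [map_zero]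
    | add s t hs ht => simp only [map_add, hs, ht]
    | tmul c x => simp
  have hw : g (TensorProduct.lid A P (I.subtype.rTensor P w)) = 0 := by
    rw [← hlid, hz, map_zero]
  obtain ⟨x, hx⟩ := (h.exact _).1 hw
  have hxI : x ∈ I • (⊤ : Submodule A M) := hpure I x (by
    rw [hx, ← I.subtype_rTensor_range P]
    exact ⟨w, rfl⟩)
  rw [← I.subtype_rTensor_range M] at hxI
  obtain ⟨v, rfl⟩ := hxI
  have hwv : w = f.lTensor I v :=
    Module.Flat.rTensor_preserves_injective_linearMap I.subtype I.injective_subtype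
      ((TensorProduct.lid A P).injective (hx.symm.trans (hlid f v).symm))
  rw [hwv]
  exact (lTensor_exact I h.exact h.surjective).apply_apply_eq_zero v

end SMulTop

section FiberSupport

variable {A : Type u} [CommRing A]

/-- The primes `p` for which `G / pG ≠ 0`. -/
def fiberSupport (A G : Type*) [CommRing A] [AddCommGroup G] [Module A G] :
    Set (PrimeSpectrum A) :=
  {p | p.asIdeal • (⊤ : Submodule A G) ≠ ⊤}

/-- The product of the modules `Hom(E(A/q), G ⊗ E(A/q))` over the primes `q` with `G / qG ≠ 0`. For
flat `G` over a Noetherian ring, this is a flat cotorsion module in which `G` embeds as a pure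
submodule. -/
abbrev HullProduct (A G : Type u) [CommRing A] [AddCommGroup G] [Module A G] : Type u :=
  (q : fiberSupport A G) →
    injectiveHull A (A ⧸ q.1.asIdeal) →ₗ[A] G ⊗[A] injectiveHull A (A ⧸ q.1.asIdeal)

namespace HullProduct

variable (A) (G : Type u) [AddCommGroup G] [Module A G]

/-- The map `g ↦ (x ↦ g ⊗ x)`. -/
noncomputable def of : G →ₗ[A] HullProduct A G :=
  LinearMap.pi fun _ => TensorProduct.mk A G _

variable {A G}

theorem of_apply (g : G) (q : fiberSupport A G) (x : injectiveHull A (A ⧸ q.1.asIdeal)) :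
    of A G g q x = g ⊗ₜ x := rfl

end HullProduct

theorem subsingleton_tensor_quotient {G : Type u} [AddCommGroup G] [Module A G]
    {p : PrimeSpectrum A} (hp : p ∉ fiberSupport A G) : Subsingleton (G ⊗[A] (A ⧸ p.asIdeal)) :=
  have := Submodule.Quotient.subsingleton_iff.2 (not_not.1 hp)
  (TensorProduct.tensorQuotEquivQuotSMul G p.asIdeal).subsingleton

variable [IsNoetherianRing A] {G : Type u} [AddCommGroup G] [Module A G] [Module.Flat A G]

theorem eq_zero_of_lTensor_injectiveHull_eq_zero {M : Type u} [AddCommGroup M] [Module A M]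
    [hM : Module.Finite A M] {z : G ⊗[A] M}
    (hz : ∀ q ∈ fiberSupport A G, ∀ h : M →ₗ[A] injectiveHull A (A ⧸ q.asIdeal),
      h.lTensor G z = 0) : z = 0 := by
  induction hM using IsNoetherianRing.induction_on_isQuotientEquivQuotientPrime A with
  | subsingleton N => exact Subsingleton.elim _ _
  | quotient N p e =>
    by_cases hp : p ∈ fiberSupport A G
    · have hinj : Function.Injective (injectiveHull.ι A (A ⧸ p.asIdeal) ∘ₗ e.toLinearMap) :=
        (injectiveHull.ι_injective _).comp e.injective
      exact (map_eq_zero_iff _ (Module.Flat.lTensor_preserves_injective_linearMap _ hinj)).1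
        (hz p hp _)
    · have := subsingleton_tensor_quotient hp
      exact (e.lTensor G).injective (Subsingleton.elim _ _)
  | exact N₁ N₂ N₃ f g hf hg hfg ih₁ ih₃ =>
    have hz₃ : g.lTensor G z = 0 := ih₃ fun q hq h => by
      rw [← LinearMap.comp_apply, ← LinearMap.lTensor_comp]
      exact hz q hq _
    obtain ⟨w, rfl⟩ := (lTensor_exact G hfg hg z).1 hz₃
    suffices w = 0 by rw [this, map_zero]
    refine ih₁ fun q hq h => ?_
    obtain ⟨h', rfl⟩ := Module.Injective.extension_property A _ _ _ f hf h
    rw [LinearMap.lTensor_comp]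
    exact hz q hq h'

namespace HullProduct

theorem mem_smul_top_of_of_mem {I : Ideal A} {y : G}
    (hy : of A G y ∈ I • (⊤ : Submodule A (HullProduct A G))) :
    y ∈ I • (⊤ : Submodule A G) := by
  have hzero : y ⊗ₜ[A] (1 : A ⧸ I) = 0 := by
    refine eq_zero_of_lTensor_injectiveHull_eq_zero fun q hq h => ?_
    have hq_mem : of A G y ⟨q, hq⟩ ∈ I • (⊤ : Submodule A (_ →ₗ[A] _)) := by
      have := Submodule.mem_map_of_mem (f := LinearMap.proj ⟨q, hq⟩) hy
      rw [Submodule.map_smul''] at this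
      exact Submodule.smul_mono le_rfl le_top this
    refine apply_eq_zero_of_mem_smul_top hq_mem ((Submodule.mem_torsionBySet_iff _ _).2 ?_)
    rintro ⟨c, hc⟩
    change c • h 1 = 0
    rw [← map_smul, Algebra.smul_def, mul_one, Ideal.Quotient.algebraMap_eq,
      Ideal.Quotient.eq_zero_iff_mem.2 hc, map_zero]
  have hmk := TensorProduct.tensorQuotEquivQuotSMul_tmul_mk I y 1
  rw [map_one, hzero, map_zero, one_smul] at hmk
  exact (Submodule.Quotient.mk_eq_zero _).1 hmk.symm

theorem of_injective : Function.Injective (of A G) := by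
  refine (injective_iff_map_eq_zero _).2 fun y hy => ?_
  have hbot := mem_smul_top_of_of_mem (I := ⊥) (y := y) (by rw [hy]; exact zero_mem _)
  rwa [Submodule.bot_smul, Submodule.mem_bot] at hbot

instance injective_tensor_injectiveHull (X : Type u) [AddCommGroup X] [Module A X] :
    Module.Injective A (G ⊗[A] injectiveHull A X) :=
  injective_tensor G _

variable (A G) in
theorem isCotorsion : IsCotorsion A (HullProduct A G) :=
  .pi fun _ => .linearMap _ _

instance : Module.Flat A (HullProduct A G) :=
  have (q : fiberSupport A G) : Module.Flat A
      (injectiveHull A (A ⧸ q.1.asIdeal) →ₗ[A] G ⊗[A] injectiveHull A (A ⧸ q.1.asIdeal)) :=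
    flat_linearMap_of_injective _ _
  flat_pi _

theorem flat_cokernel : Module.Flat A (HullProduct A G ⧸ LinearMap.range (of A G)) :=
  (IsShortExact.mkQ_range of_injective).flat_right_of_pure fun _ _ => mem_smul_top_of_of_mem

end HullProduct

end FiberSupport

section Vanishing

variable {A : Type u} [CommRing A] [IsNoetherianRing A] {G : Type u} [AddCommGroup G] [Module A G]
  [Module.Flat A G] {p : PrimeSpectrum A}

namespace HullProduct

theorem exists_smul_sub_of_mem (hp : ∀ q ∈ fiberSupport A G, ¬p < q) (φ : HullProduct A G) :
    ∃ s ∉ p.asIdeal, ∃ g : G,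
      s • φ - of A G g ∈ p.asIdeal • (⊤ : Submodule A (HullProduct A G)) := by
  have hFG : p.asIdeal.FG := IsNoetherian.noetherian _
  have hbot (q : fiberSupport A G) (hqp : q.1 ≠ p) :
      Submodule.torsionBySet A (injectiveHull A (A ⧸ q.1.asIdeal)) (p.asIdeal : Set A) = ⊥ :=
    torsionBySet_injectiveHull_eq_bot fun hle => hp q q.2 (lt_of_le_of_ne hle hqp.symm)
  by_cases hpG : p ∈ fiberSupport A G
  · have htors : φ ⟨p, hpG⟩ (injectiveHull.ι A (A ⧸ p.asIdeal) 1) ∈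
        Submodule.torsionBySet A _ (p.asIdeal : Set A) := by
      refine (Submodule.mem_torsionBySet_iff _ _).2 fun c => ?_
      change (c : A) • _ = (0 : G ⊗[A] injectiveHull A (A ⧸ p.asIdeal))
      rw [← map_smul, ← map_smul, Algebra.smul_def, mul_one, Ideal.Quotient.algebraMap_eq,
        Ideal.Quotient.eq_zero_iff_mem.2 c.2, map_zero, map_zero]
    obtain ⟨s, hs, g, hg⟩ := exists_smul_eq_tmul_ι G htors
    refine ⟨s, hs, g, pi_linearMap_mem_smul_top hFG fun q => ?_⟩
    by_cases hqp : q.1 = p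
    · obtain ⟨q, hq⟩ := q
      subst hqp
      refine torsionBySet_le_ker_of_apply_ι_one q.2.ne_top (fun s hs =>
        (isSMulRegular_injectiveHull (isSMulRegular_quotient hs)).lTensor G) ?_
      change s • φ ⟨q, hq⟩ _ - _ = _
      rw [hg, of_apply, sub_self]
    · simp only [hbot q hqp, bot_le]
  · refine ⟨1, (Ideal.ne_top_iff_one _).1 p.2.ne_top, 0, pi_linearMap_mem_smul_top hFG fun q => ?_⟩
    simp only [hbot q fun hqp => hpG (hqp ▸ q.2), bot_le]

theorem exists_lt_of_mem_fiberSupport_cokernel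
    (hp : p ∈ fiberSupport A (HullProduct A G ⧸ LinearMap.range (of A G))) :
    ∃ q ∈ fiberSupport A G, p < q := by
  by_contra! hlt
  refine hp (eq_top_iff.2 fun y _ => ?_)
  obtain ⟨φ, rfl⟩ := Submodule.mkQ_surjective _ y
  obtain ⟨s, hs, g, hmem⟩ := exists_smul_sub_of_mem hlt φ
  have := flat_cokernel (A := A) (G := G)
  refine mem_smul_top_of_smul_mem hs ?_
  have hmap := Submodule.mem_map_of_mem (f := (LinearMap.range (of A G)).mkQ) hmem
  have hg : (LinearMap.range (of A G)).mkQ (of A G g) = 0 :=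
    (Submodule.Quotient.mk_eq_zero _).2 (LinearMap.mem_range_self (of A G) g)
  rw [Submodule.map_smul'', map_sub, map_smul, hg, sub_zero] at hmap
  exact Submodule.smul_mono le_rfl le_top hmap

end HullProduct

theorem subsingleton_of_fiberSupport_eq_empty (h : fiberSupport A G = ∅) : Subsingleton G :=
  have : IsEmpty (fiberSupport A G) := Set.isEmpty_coe_sort.2 h
  (HullProduct.of_injective (A := A)).subsingleton

variable {R : Type u} [CommRing R] [Algebra R A] (F : Type u) [AddCommGroup F] [Module R F]
  [Module.Flat R F]

theorem subsingleton_ext_of_le_coheight {n i : ℕ} (hn : ∀ p : PrimeSpectrum A,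
    Order.coheight p < (n + i : ℕ)) (G : Type u) [AddCommGroup G] [Module R G] [Module A G]
    [IsScalarTower R A G] [Module.Flat A G] (hG : ∀ p ∈ fiberSupport A G, n ≤ Order.coheight p) :
    Subsingleton (ModExt R F G i) := by
  induction i generalizing n G with
  | zero =>
    have : Subsingleton G := subsingleton_of_fiberSupport_eq_empty
      (Set.eq_empty_of_forall_notMem fun p hp => (hn p).not_ge (hG p hp))
    exact ModExt.zeroEquiv.subsingleton
  | succ i ih =>
    have := HullProduct.flat_cokernel (A := A) (G := G)
    have := ih (n := n + 1) (by rwa [add_right_comm])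
      (HullProduct A G ⧸ LinearMap.range (HullProduct.of A G)) fun p hp => by
        obtain ⟨q, hq, hpq⟩ := HullProduct.exists_lt_of_mem_fiberSupport_cokernel hp
        push_cast
        exact (add_le_add_left (hG q hq) 1).trans (Order.coheight_add_one_le hpq)
    have := ((HullProduct.isCotorsion A G).restrictScalars (R := R)).subsingleton_ext F i
    have h : IsShortExact ((HullProduct.of A G).restrictScalars R)
        ((LinearMap.range (HullProduct.of A G)).mkQ.restrictScalars R) :=
      have h := IsShortExact.mkQ_range (HullProduct.of_injective (A := A) (G := G))
      ⟨h.injective, h.exact, h.surjective⟩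
    exact h.subsingleton_ext_left

theorem subsingleton_ext_of_ringKrullDim_lt (G : Type u) [AddCommGroup G] [Module R G]
    [Module A G] [IsScalarTower R A G] [Module.Flat A G] {i : ℕ} (hi : ringKrullDim A < i) :
    Subsingleton (ModExt R F G i) :=
  subsingleton_ext_of_le_coheight (A := A) (n := 0) F
    (fun p => by
      rw [zero_add]
      exact WithBot.coe_lt_coe.1 ((Order.coheight_le_krullDim p).trans_lt hi))
    G fun _ _ => by simp

end Vanishing

section Descent

variable {R : Type u} [CommRing R]

theorem IsShortExact.ker_rangeRestrict {B C : Type u} [AddCommGroup B] [Module R B]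
    [AddCommGroup C] [Module R C] (w : B →ₗ[R] C) :
    IsShortExact (LinearMap.ker w).subtype w.rangeRestrict := by
  have h := IsShortExact.ker_subtype w.surjective_rangeRestrict
  rwa [LinearMap.ker_rangeRestrict] at h

theorem exists_comp_mk₀_eq {X B C : Type u} [AddCommGroup X] [Module R X] [AddCommGroup B]
    [Module R B] [AddCommGroup C] [Module R C] {n : ℕ} (w : B →ₗ[R] C)
    [Subsingleton (ModExt R X (C ⧸ LinearMap.range w) n)]
    [Subsingleton (ModExt R X (LinearMap.ker w) (n + 1))] (x : ModExt R X C n) :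
    ∃ z : ModExt R X B n, z.comp (Abelian.Ext.mk₀ (ModuleCat.ofHom w)) (add_zero n) = x := by
  obtain ⟨y, rfl⟩ := Abelian.Ext.covariant_sequence_exact₂ _
    (IsShortExact.subtype_mkQ (LinearMap.range w)).shortExact x
    (Subsingleton.elim (α := ModExt R X (C ⧸ LinearMap.range w) n) _ _)
  obtain ⟨z, rfl⟩ := Abelian.Ext.covariant_sequence_exact₃ _
    (IsShortExact.ker_rangeRestrict w).shortExact y rfl
    (Subsingleton.elim (α := ModExt R X (LinearMap.ker w) (n + 1)) _ _)
  refine ⟨z, ?_⟩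
  rw [Abelian.Ext.comp_assoc_of_second_deg_zero, Abelian.Ext.mk₀_comp_mk₀]
  rfl

theorem exists_linearMap_quotient_ne_zero [IsNoetherianRing R] (H : Type*) [AddCommGroup H]
    [Module R H] [Module.Finite R H] {q : Ideal R} (hq_top : q ≠ ⊤)
    (hq : Module.annihilator R H ≤ q) : ∃ h : H →ₗ[R] R ⧸ q, h ≠ 0 := by
  by_contra! hzero
  have : Subsingleton (H →ₗ[R] R ⧸ q) := subsingleton_of_forall_eq 0 hzero
  obtain ⟨r, hr, hreg⟩ := IsSMulRegular.subsingleton_linearMap_iff.1 this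
  refine hq_top ((Ideal.eq_top_iff_one q).2 (Ideal.Quotient.eq_zero_iff_mem.1 ?_))
  refine hreg.right_eq_zero_of_smul ?_
  rw [Algebra.smul_def, map_one, mul_one]
  exact Ideal.Quotient.eq_zero_iff_mem.2 (hq hr)

theorem lt_annihilator_quotient {q : Ideal R} {K : Submodule R (R ⧸ q)} (hK : K ≠ ⊥) :
    q < Module.annihilator R ((R ⧸ q) ⧸ K) := by
  refine lt_of_le_not_ge ?_ fun hle => hK (eq_bot_iff.2 fun y hy => ?_)
  · conv_lhs => rw [← Ideal.annihilator_quotient (I := q)]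
    exact LinearMap.annihilator_le_of_surjective K.mkQ K.mkQ_surjective
  · obtain ⟨c, rfl⟩ := Ideal.Quotient.mk_surjective y
    refine Ideal.Quotient.eq_zero_iff_mem.2 (hle (Module.mem_annihilator.2 fun z => ?_))
    obtain ⟨z, rfl⟩ := K.mkQ_surjective z
    obtain ⟨b, rfl⟩ := Ideal.Quotient.mk_surjective z
    rw [← map_smul, Submodule.mkQ_apply, Submodule.Quotient.mk_eq_zero]
    have hcb : c • Ideal.Quotient.mk q b = b • Ideal.Quotient.mk q c := by
      rw [Algebra.smul_def, Algebra.smul_def]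
      exact mul_comm _ _
    exact hcb ▸ K.smul_mem b hy

theorem ringKrullDim_quotient_anti {I J : Ideal R} (h : I ≤ J) :
    ringKrullDim (R ⧸ J) ≤ ringKrullDim (R ⧸ I) :=
  ringKrullDim_le_of_surjective (Ideal.Quotient.factor h) (Ideal.Quotient.factor_surjective h)

theorem exists_nat_gt_of_lt_top {d : WithBot ℕ∞} (hd : d < ⊤) : ∃ n : ℕ, d < n := by
  induction d using WithBot.recBotCoe with
  | bot => exact ⟨0, WithBot.bot_lt_coe _⟩
  | coe d =>
    obtain ⟨k, rfl⟩ := ENat.ne_top_iff_exists.1 (WithBot.coe_lt_coe.1 hd).ne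
    exact ⟨k + 1, mod_cast k.lt_succ_self⟩

/-- `Ext^i_R(F, T) = 0` for all finitely generated `R`-modules `T` killed by `J`. When this holds in
degree `i + 1`, the functor `Ext^i_R(F, -)` is right exact on those modules. -/
def ExtVanishesOn {R : Type u} [CommRing R] (F : Type u) [AddCommGroup F] [Module R F]
    (J : Ideal R) (i : ℕ) : Prop :=
  ∀ (T : Type u) [AddCommGroup T] [Module R T] [Module.Finite R T],
    J ≤ Module.annihilator R T → Subsingleton (ModExt R F T i)

namespace ExtVanishesOn

variable [IsNoetherianRing R] {F : Type u} [AddCommGroup F] [Module R F] {J : Ideal R} {i : ℕ}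

theorem of_prime (hJ : ∀ p : Ideal R, p.IsPrime → J ≤ p → Subsingleton (ModExt R F (R ⧸ p) i)) :
    ExtVanishesOn F J i := by
  intro T _ _ hT hJT
  induction hT using IsNoetherianRing.induction_on_isQuotientEquivQuotientPrime R with
  | subsingleton N => exact ModExt.subsingleton_of_subsingleton i
  | quotient N p e =>
    rw [e.annihilator_eq, Ideal.annihilator_quotient] at hJT
    have := hJ p.asIdeal p.2 hJT
    exact ModExt.subsingleton_of_linearEquiv e.symm i
  | exact N₁ N₂ N₃ f g hf hg hfg ih₁ ih₃ =>
    have := ih₁ (hJT.trans (f.annihilator_le_of_injective hf))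
    have := ih₃ (hJT.trans (g.annihilator_le_of_surjective hg))
    exact (IsShortExact.mk hf hfg hg).subsingleton_ext_middle

theorem of_ringKrullDim_lt [Module.Flat R F] (hJ : ringKrullDim (R ⧸ J) < i) :
    ExtVanishesOn F J i :=
  of_prime fun p _ hJp => subsingleton_ext_of_ringKrullDim_lt (A := R ⧸ p) F (R ⧸ p)
    ((ringKrullDim_quotient_anti hJp).trans_lt hJ)

variable {H : Type u} [AddCommGroup H] [Module R H] [Module.Finite R H]

theorem smul_top_eq_top {I : Ideal R} (hI : ExtVanishesOn F I i)
    (hH : ExtVanishesOn F (Module.annihilator R H) (i + 1)) :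
    I • (⊤ : Submodule R (ModExt R F H i)) = ⊤ := by
  obtain ⟨r, f, rfl⟩ := Submodule.fg_iff_exists_fin_generating_family.1 (IsNoetherian.noetherian I)
  let w : (Fin r → H) →ₗ[R] H := ∑ k, f k • LinearMap.proj k
  have hw (k : Fin r) (y : H) : f k • y ∈ LinearMap.range w :=
    ⟨Pi.single k y, by simp [w, LinearMap.sum_apply, Pi.single_apply]⟩
  have := hI (H ⧸ LinearMap.range w) (Submodule.span_le.2 (Set.range_subset_iff.2 fun k =>
    Module.mem_annihilator.2 fun z => by
      obtain ⟨y, rfl⟩ := Submodule.mkQ_surjective _ z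
      exact (Submodule.Quotient.mk_eq_zero _).2 (hw k y)))
  have := hH (LinearMap.ker w) fun c hc => Module.mem_annihilator.2 fun x => by
    ext k
    exact Module.mem_annihilator.1 hc _
  refine eq_top_iff.2 fun x _ => ?_
  obtain ⟨z, rfl⟩ := exists_comp_mk₀_eq w x
  have hsum : ModuleCat.ofHom w = ∑ k, f k • ModuleCat.ofHom (LinearMap.proj k) := by
    ext x
    simp [w, ModuleCat.hom_sum]
  rw [hsum, Abelian.Ext.mk₀_sum, Abelian.Ext.comp_sum]
  refine Submodule.sum_mem _ fun k _ => ?_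
  rw [Abelian.Ext.mk₀_smul, Abelian.Ext.comp_smul]
  exact Submodule.smul_mem_smul (Submodule.subset_span ⟨k, rfl⟩) trivial

theorem of_succ (hH : ExtVanishesOn F (Module.annihilator R H) (i + 1))
    [Subsingleton (ModExt R F H i)] : ExtVanishesOn F (Module.annihilator R H) i := by
  suffices ∀ J : Ideal R, Module.annihilator R H ≤ J → ExtVanishesOn F J i from this _ le_rfl
  intro J
  induction J using WellFoundedGT.induction with
  | ind J ih =>
    refine fun hJ => of_prime fun q hq hJq => ?_
    obtain ⟨h, hne⟩ := exists_linearMap_quotient_ne_zero H hq.ne_top (hJ.trans hJq)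
    have := hH (LinearMap.ker h)
      ((LinearMap.ker h).subtype.annihilator_le_of_injective (Submodule.injective_subtype _))
    have hrange : Subsingleton (ModExt R F (LinearMap.range h) i) :=
      (IsShortExact.ker_rangeRestrict h).subsingleton_ext_right
    have hlt : J < Module.annihilator R ((R ⧸ q) ⧸ LinearMap.range h) :=
      hJq.trans_lt (lt_annihilator_quotient (mt LinearMap.range_eq_bot.1 hne))
    have hcoker : Subsingleton (ModExt R F ((R ⧸ q) ⧸ LinearMap.range h) i) :=
      ih _ hlt (hJ.trans hlt.le) _ le_rfl
    exact (IsShortExact.subtype_mkQ (LinearMap.range h)).subsingleton_ext_middle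

theorem of_smul_top_ne [Module.Flat R F] {m : Ideal R} [m.IsMaximal]
    (hdim : ringKrullDim (R ⧸ Module.annihilator R H) < ⊤)
    (hnak : ∀ i : ℕ, 1 ≤ i → i ≤ ringKrullDim (R ⧸ Module.annihilator R H) →
      Subsingleton (ModExt R F H i) ∨ m • (⊤ : Submodule R (ModExt R F H i)) ≠ ⊤)
    (hi : 1 ≤ i) : ExtVanishesOn F (Module.annihilator R H) i := by
  obtain ⟨n, hn⟩ := exists_nat_gt_of_lt_top hdim
  have hlarge (k : ℕ) (hk : n ≤ k) : ExtVanishesOn F (Module.annihilator R H) k :=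
    of_ringKrullDim_lt (hn.trans_le (mod_cast hk))
  refine (le_total n i).elim (hlarge i) fun hin => ?_
  refine Nat.decreasingInduction' (fun k _ hik hk => ?_) hin (hlarge n le_rfl)
  by_cases hkdim : k ≤ ringKrullDim (R ⧸ Module.annihilator R H)
  · let := Ideal.Quotient.field m
    have hm : ExtVanishesOn F m k := of_ringKrullDim_lt (by
      rw [ringKrullDim_eq_zero_of_field]
      exact_mod_cast hi.trans hik)
    have := (hnak k (hi.trans hik) hkdim).resolve_right (not_not.2 (hm.smul_top_eq_top hk))
    exact of_succ hk
  · exact of_ringKrullDim_lt (not_le.1 hkdim)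

end ExtVanishesOn

end Descent

theorem smul_top_ne_of_linearEquiv {R E E' : Type*} [CommRing R] [AddCommGroup E] [Module R E]
    [AddCommGroup E'] [Module R E'] (e : E ≃ₗ[R] E') {I : Ideal R}
    (h : I • (⊤ : Submodule R E) ≠ ⊤) : I • (⊤ : Submodule R E') ≠ ⊤ := by
  intro htop
  have hmap := congrArg (Submodule.map e.symm.toLinearMap) htop
  rw [Submodule.map_smul'', Submodule.map_top, LinearEquiv.range] at hmap
  exact h hmap

theorem annihilator_le_annihilator_linearMap (R M N : Type*) [CommRing R] [AddCommGroup M]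
    [Module R M] [AddCommGroup N] [Module R N] :
    Module.annihilator R N ≤ Module.annihilator R (M →ₗ[R] N) := fun _ hc =>
  Module.mem_annihilator.2 fun f => LinearMap.ext fun x => Module.mem_annihilator.1 hc (f x)

theorem nonempty_extModule_tensor_equiv {R F M N : Type u} [CommRing R] [AddCommGroup F]
    [Module R F] [Module.Flat R F] [AddCommGroup M] [Module R M] [AddCommGroup N] [Module R N]
    (hvanish : ∀ i : ℕ, 1 ≤ i → Subsingleton (extModule R M N i)) {i : ℕ} (hi : 1 ≤ i) :
    Nonempty (extModule R (F ⊗[R] M) N i ≃ₗ[R] ModExt R F (M →ₗ[R] N) i) := by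
  obtain ⟨i, rfl⟩ := Nat.exists_eq_add_of_le' hi
  obtain ⟨e⟩ := nonempty_ext_tensor_equiv F M i N fun k =>
    have := hvanish (k + 1) (Nat.le_add_left 1 k)
    (extModuleEquiv R M N k).symm.toEquiv.subsingleton
  exact ⟨(extModuleEquiv R (F ⊗[R] M) N i).trans e⟩

theorem ext_baseChange_vanishing_of_nak_general (R F M N : Type u) [CommRing R]
    [IsNoetherianRing R] [AddCommGroup F] [Module R F] [Module.Flat R F] [AddCommGroup M]
    [Module R M] [Module.Finite R M] [AddCommGroup N] [Module R N] [Module.Finite R N]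
    (m : Ideal R) [m.IsMaximal] (hdim : ringKrullDim (R ⧸ Module.annihilator R N) < ⊤)
    (hvanish : ∀ i : ℕ, 1 ≤ i → Subsingleton (extModule R M N i))
    (hnak : ∀ i : ℕ, 1 ≤ i → i ≤ ringKrullDim (R ⧸ Module.annihilator R N) →
      Subsingleton (extModule R (F ⊗[R] M) N i) ∨
        m • (⊤ : Submodule R (extModule R (F ⊗[R] M) N i)) ≠ ⊤) :
    ∀ i : ℕ, 1 ≤ i → Subsingleton (extModule R (F ⊗[R] M) N i) := by
  intro i hi
  have hle := ringKrullDim_quotient_anti (annihilator_le_annihilator_linearMap R M N)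
  have hvanishesOn : ExtVanishesOn F (Module.annihilator R (M →ₗ[R] N)) i := by
    refine .of_smul_top_ne (m := m) (hle.trans_lt hdim) (fun k hk hkdim => ?_) hi
    obtain ⟨e⟩ := nonempty_extModule_tensor_equiv (F := F) hvanish hk
    exact (hnak k hk (hkdim.trans hle)).imp e.toEquiv.subsingleton_congr.1
      (smul_top_ne_of_linearEquiv e)
  obtain ⟨e⟩ := nonempty_extModule_tensor_equiv (F := F) hvanish hi
  have := hvanishesOn (M →ₗ[R] N) le_rfl
  exact e.toEquiv.subsingleton

/-- Let `φ : (R, m) → (S, n)` be a flat local homomorphism of commutative Noetherian local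
rings such that `R/m → S/mS` is an isomorphism, and let `M`, `N` be finitely generated
`R`-modules with `Ext^i_R(M, N) = 0` for all `i ≥ 1`. If for each `i` with
`1 ≤ i ≤ dim_R(N)` the module `Ext^i_R(S ⊗_R M, N)` is in `NAK(R)` (it is zero or
`m · Ext^i_R(S ⊗_R M, N) ≠ Ext^i_R(S ⊗_R M, N)`), then `Ext^i_R(S ⊗_R M, N) = 0` for all
`i ≥ 1`. -/
theorem ext_baseChange_vanishing_of_nak
    (R S : Type u) [CommRing R] [CommRing S] [IsLocalRing R] [IsLocalRing S]
    [IsNoetherianRing R] [IsNoetherianRing S] [Algebra R S] [Module.Flat R S]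
    [IsLocalHom (algebraMap R S)]
    (hres : Function.Bijective
      (Ideal.quotientMap ((IsLocalRing.maximalIdeal R).map (algebraMap R S)) (algebraMap R S)
        Ideal.le_comap_map))
    (M N : Type u) [AddCommGroup M] [Module R M] [Module.Finite R M]
    [AddCommGroup N] [Module R N] [Module.Finite R N]
    (hvanish : ∀ i : ℕ, 1 ≤ i → Subsingleton (extModule R M N i))
    (hnak : ∀ i : ℕ, 1 ≤ i →
      ((i : ℕ∞) : WithBot ℕ∞) ≤ ringKrullDim (R ⧸ Module.annihilator R N) →
      (Subsingleton (extModule R (S ⊗[R] M) N i) ∨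
        (IsLocalRing.maximalIdeal R) • (⊤ : Submodule R (extModule R (S ⊗[R] M) N i)) ≠ ⊤)) :
    ∀ i : ℕ, 1 ≤ i → Subsingleton (extModule R (S ⊗[R] M) N i) :=
  ext_baseChange_vanishing_of_nak_general R S M N (IsLocalRing.maximalIdeal R)
    ((ringKrullDim_quotient_le _).trans_lt ringKrullDim_lt_top) hvanish hnak
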